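/- Let p ≡ 3 (mod 4) be a prime. Then the sum over k from 0 to (p^2-1)/2 of ((1/2)_k)^3/(k!)^3 is congruent to p^2 · (3/4)_{(p^2-1)/2} / (5/4)_{(p^2-1)/2} modulo p^4, i.e., the difference of these two rational numbers has p-adic valuation at least 4. -/

import Mathlib

open Finset

/-- The rising factorial (Pochhammer symbol) `(a)_k = a(a+1)⋯(a+k-1)` for `a : ℚ`. -/
def risingFactorial (a : ℚ) (k : ℕ) : ℚ := ∏ i ∈ Finset.range k, (a + i)

lemma rf_succ (a : ℚ) (k : ℕ) : risingFactorial a (k+1) = risingFactorial a k * (a + k) := by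
  simp [risingFactorial, Finset.prod_range_succ]

lemma rf_zero (a : ℚ) : risingFactorial a 0 = 1 := by simp [risingFactorial]

lemma rf_succ' (a : ℚ) (k : ℕ) : risingFactorial a (k+1) = a * risingFactorial (a+1) k := by
  simp only [risingFactorial, Finset.prod_range_succ']
  rw [mul_comm]
  simp only [Nat.cast_zero, add_zero]
  congr 1
  apply Finset.prod_congr rfl
  intro i _
  push_cast; ring

lemma rf_ne (a : ℚ) (k : ℕ) (h : ∀ i : ℕ, a + i ≠ 0) : risingFactorial a k ≠ 0 :=
  Finset.prod_ne_zero_iff.mpr fun i _ => h i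

lemma rf_neg_zero (m : ℕ) : risingFactorial (-(m:ℚ)) (m+1) = 0 := by
  rw [rf_succ]; simp

/-- Summand of Dixon's terminating sum. -/
def dix (a c : ℚ) (m k : ℕ) : ℚ :=
  risingFactorial a k * risingFactorial (-(m:ℚ)) k * risingFactorial c k /
    ((k.factorial : ℚ) * risingFactorial (1+a+m) k * risingFactorial (1+a-c) k)

lemma dix_partial (a c : ℚ) (m : ℕ) (h1 : ∀ i : ℕ, 1 + a + i ≠ 0) (h2 : ∀ i : ℕ, 1 + a - c + i ≠ 0)
    (K : ℕ) :
    ∑ k ∈ range (K+1), ((1+a/2+m)*(1+a-c+m) * dix a c (m+1) k - (1+a+m)*(1+a/2-c+m) * dix a c m k)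
      = 1/2 * (risingFactorial a (K+1) * risingFactorial (-(m:ℚ)) K * risingFactorial c (K+1)) /
        ((K.factorial : ℚ) * risingFactorial (2+a+m) K * risingFactorial (1+a-c) K) := by
  have h3 : ∀ i : ℕ, 2 + a + m + i ≠ 0 := by
    intro i; have := h1 (m+1+i); push_cast at this; intro h; apply this; linarith
  induction K with
  | zero => simp [dix, rf_zero, rf_succ]; ring
  | succ K ih =>
    rw [Finset.sum_range_succ, ih]
    unfold dix
    have e1 : risingFactorial (-((m+1:ℕ):ℚ)) (K+1) = (-(m:ℚ)-1) * risingFactorial (-(m:ℚ)) K := by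
      rw [rf_succ']; push_cast; congr 2 <;> ring
    have e2 : risingFactorial (1+a+m) (K+1) = (1+a+m) * risingFactorial (2+a+m) K := by
      rw [rf_succ']; congr 2; ring
    have e3 : risingFactorial (1+a+((m+1:ℕ):ℚ)) (K+1) = risingFactorial (2+a+m) K * (2+a+m+K) := by
      rw [rf_succ]; push_cast; congr 2 <;> ring
    rw [e1, e2, e3, rf_succ a (K+1), rf_succ c (K+1), rf_succ (-(m:ℚ)) K, rf_succ (1+a-c) K,
      rf_succ (2+a+m) K, Nat.factorial_succ]
    have n1 := rf_ne (2+a+m) K h3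
    have n2 := rf_ne (1+a-c) K h2
    have n3 : (K.factorial : ℚ) ≠ 0 := by positivity
    have n4 := h1 m
    have n5 := h2 K
    have n6 := h3 K
    generalize risingFactorial (2+a+m) K = V at *
    generalize risingFactorial (1+a-c) K = D at *
    generalize risingFactorial (-(m:ℚ)) K = X at *
    generalize risingFactorial a (K+1) = P at *
    generalize risingFactorial c (K+1) = C at *
    push_cast
    generalize (K.factorial : ℚ) = Q at *
    have n7 : ((K:ℚ)+1) ≠ 0 := by positivity
    field_simp
    ring

lemma dixon (a c : ℚ) (h1 : ∀ i : ℕ, 1 + a + i ≠ 0) (h2 : ∀ i : ℕ, 1 + a - c + i ≠ 0) (m : ℕ) :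
    (∑ k ∈ range (m+1), dix a c m k) * (risingFactorial (1+a/2) m * risingFactorial (1+a-c) m)
      = risingFactorial (1+a) m * risingFactorial (1+a/2-c) m := by
  induction m with
  | zero => simp [dix, rf_zero]
  | succ m ih =>
    have h := dix_partial a c m h1 h2 (m+1)
    rw [rf_neg_zero, Finset.sum_sub_distrib, ← Finset.mul_sum, ← Finset.mul_sum,
      Finset.sum_range_succ (fun k => dix a c m k) (m+1)] at h
    have z : dix a c m (m+1) = 0 := by simp [dix, rf_neg_zero]
    rw [z] at h
    simp only [add_zero, mul_zero, zero_mul, zero_div] at h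
    rw [rf_succ, rf_succ, rf_succ, rf_succ]
    linear_combination (risingFactorial (1+a/2) m * risingFactorial (1+a-c) m) * h + (1+a+m)*(1+a/2-c+m) * ih

/-- Summand of the terminating Whipple sum. -/
def whp (m k : ℕ) : ℚ :=
  risingFactorial (-(m:ℚ)) k * risingFactorial (m+1) k * risingFactorial (1/2) k /
    (k.factorial : ℚ)^3

lemma whp_partial (m K : ℕ) :
    ∑ k ∈ range (K+1), (((m:ℚ)+2)^2 * whp (m+2) k - ((m:ℚ)+1)^2 * whp m k)
      = 2 * (2*m+3) * (risingFactorial (-(m:ℚ)-1) K * risingFactorial (m+2) K *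
          risingFactorial (1/2) (K+1)) / (K.factorial : ℚ)^3 := by
  induction K with
  | zero => simp [whp, rf_zero, rf_succ]; ring
  | succ K ih =>
    rw [Finset.sum_range_succ, ih]
    unfold whp
    have m1 : (m:ℚ)+1 ≠ 0 := by positivity
    have m2 : (m:ℚ)+2 ≠ 0 := by positivity
    have e1 : risingFactorial (-((m+2:ℕ):ℚ)) (K+1) = (-(m:ℚ)-2) * risingFactorial (-(m:ℚ)-1) K := by
      rw [rf_succ']; push_cast; congr 2 <;> ring
    have e2 : risingFactorial (-(m:ℚ)) (K+1) = risingFactorial (-(m:ℚ)-1) K * (-(m:ℚ)-1+K) * (-(m:ℚ)+K) / (-(m:ℚ)-1) := by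
      have := rf_succ' (-(m:ℚ)-1) K
      rw [rf_succ] at this
      have q : (-(m:ℚ)-1+1) = -m := by ring
      rw [q] at this
      rw [rf_succ, this]
      have : (-(m:ℚ)-1) ≠ 0 := by intro h; apply m1; linarith
      field_simp
    have e3 : risingFactorial ((m:ℚ)+1) (K+1) = (m+1) * risingFactorial (m+2) K := by
      rw [rf_succ']; congr 2; ring
    have e4 : risingFactorial (((m+2:ℕ):ℚ)+1) (K+1) = risingFactorial ((m:ℚ)+2) K * (m+2+K) * (m+3+K) / (m+2) := by
      have := rf_succ' ((m:ℚ)+2) K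
      rw [rf_succ] at this
      rw [rf_succ, this]
      push_cast
      field_simp
      ring
    rw [e1, e2, e3, e4, rf_succ (1/2) (K+1), rf_succ (-(m:ℚ)-1) K, rf_succ ((m:ℚ)+2) K,
      Nat.factorial_succ]
    have n3 : (K.factorial : ℚ) ≠ 0 := by positivity
    generalize risingFactorial (-(m:ℚ)-1) K = X at *
    generalize risingFactorial ((m:ℚ)+2) K = Y at *
    generalize risingFactorial (1/2) (K+1) = Z at *
    push_cast
    generalize (K.factorial : ℚ) = Q at *
    have n7 : ((K:ℚ)+1) ≠ 0 := by positivity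
    have : (-(m:ℚ)-1) ≠ 0 := by intro h; apply m1; linarith
    have e : (-(m:ℚ)-1) = -(m+1) := by ring
    rw [e]
    field_simp
    ring

lemma whp_zero (m k : ℕ) (h : m < k) : whp m k = 0 := by
  have : risingFactorial (-(m:ℚ)) k = 0 := by
    apply Finset.prod_eq_zero (Finset.mem_range.mpr h); simp
  simp [whp, this]

lemma whipple (N : ℕ) :
    ∑ k ∈ range (2*N+1), whp (2*N) k = (risingFactorial (1/2) N / (N.factorial : ℚ))^2 := by
  induction N with
  | zero => simp [whp, rf_zero]
  | succ N ih =>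
    have h := whp_partial (2*N) (2*N+2)
    have z : risingFactorial (-((2*N:ℕ):ℚ)-1) (2*N+2) = 0 := by
      apply Finset.prod_eq_zero (i := 2*N+1) (by simp); push_cast; ring
    rw [z, Finset.sum_sub_distrib, ← Finset.mul_sum, ← Finset.mul_sum,
      Finset.sum_range_succ (fun k => whp (2*N) k) (2*N+2),
      Finset.sum_range_succ (fun k => whp (2*N) k) (2*N+1), ih, whp_zero _ _ (by omega), whp_zero _ _ (by omega)] at h
    rw [show 2*(N+1) = 2*N+2 by ring, rf_succ, Nat.factorial_succ]
    have n3 : (N.factorial : ℚ) ≠ 0 := by positivity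
    have n4 : ((N:ℚ)+1) ≠ 0 := by positivity
    push_cast at h ⊢
    have : (2*(N:ℚ)+2)^2 ≠ 0 := by positivity
    apply mul_left_cancel₀ this
    have h' : (2*(N:ℚ)+2)^2 * ∑ k ∈ range (2*N+2+1), whp (2*N+2) k = (2*(N:ℚ)+1)^2 * (risingFactorial (1/2) N / (N.factorial : ℚ))^2 := by
      simp only [add_zero, zero_mul, mul_zero, zero_div] at h
      linarith
    rw [h']
    field_simp
    ring

/-- `x` is a `p`-integral multiple of `p ^ r`. -/
def DD (p r : ℕ) (x : ℚ) : Prop := ∃ a b : ℤ, ¬ ((p : ℤ) ∣ b) ∧ x * (b : ℚ) = (p : ℚ) ^ r * (a : ℚ)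

/-- `x` is nonzero with `p`-integral inverse. -/
def UU (p : ℕ) (x : ℚ) : Prop := x ≠ 0 ∧ DD p 0 x⁻¹


lemma one_nd {p : ℕ} (hp : p.Prime) : ¬ ((p : ℤ) ∣ 1) := by
  intro h
  have := Int.natCast_dvd_natCast.mp (by simpa using h : (p:ℤ) ∣ ((1:ℕ):ℤ))
  exact hp.one_lt.ne' (Nat.dvd_one.mp this)

lemma mul_nd {p : ℕ} (hp : p.Prime) {a b : ℤ} (ha : ¬ ((p : ℤ) ∣ a)) (hb : ¬ ((p : ℤ) ∣ b)) : ¬ ((p : ℤ) ∣ a * b) := by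
  intro h
  rcases (Nat.prime_iff_prime_int.mp hp).dvd_or_dvd h with h | h
  · exact ha h
  · exact hb h

lemma DD.add {p : ℕ} (hp : p.Prime) {r : ℕ} {x y : ℚ} (hx : DD p r x) (hy : DD p r y) : DD p r (x + y) := by
  obtain ⟨a, b, hb, e⟩ := hx
  obtain ⟨a', b', hb', e'⟩ := hy
  refine ⟨a*b'+a'*b, b*b', mul_nd hp hb hb', ?_⟩
  push_cast
  linear_combination (b':ℚ) * e + (b:ℚ) * e'

lemma DD.mul {p : ℕ} (hp : p.Prime) {r s : ℕ} {x y : ℚ} (hx : DD p r x) (hy : DD p s y) : DD p (r+s) (x * y) := by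
  obtain ⟨a, b, hb, e⟩ := hx
  obtain ⟨a', b', hb', e'⟩ := hy
  refine ⟨a*a', b*b', mul_nd hp hb hb', ?_⟩
  push_cast
  rw [pow_add]
  linear_combination (y * b':ℚ) * e + ((p:ℚ)^r * a) * e'

lemma DD.mul0 {p : ℕ} (hp : p.Prime) {r : ℕ} {x y : ℚ} (hx : DD p r x) (hy : DD p 0 y) : DD p r (x * y) := hx.mul hp hy

lemma DD.zmul {p : ℕ} (hp : p.Prime) {r : ℕ} {x y : ℚ} (hx : DD p 0 x) (hy : DD p r y) : DD p r (x * y) := by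
  rw [mul_comm]; exact hy.mul hp hx

lemma DD_int {p : ℕ} (hp : p.Prime) (n : ℤ) : DD p 0 (n : ℚ) := ⟨n, 1, one_nd hp, by simp⟩

lemma DD_nat {p : ℕ} (hp : p.Prime) (n : ℕ) : DD p 0 (n : ℚ) := by simpa using DD_int hp (n:ℤ)

lemma DD_one {p : ℕ} (hp : p.Prime) : DD p 0 1 := by simpa using DD_int hp 1

lemma DD_zero {p : ℕ} (hp : p.Prime) (r : ℕ) : DD p r 0 := ⟨0, 1, one_nd hp, by simp⟩

lemma DD_ppow {p : ℕ} (hp : p.Prime) (r : ℕ) : DD p r ((p:ℚ)^r) := ⟨1, 1, one_nd hp, by simp⟩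

lemma DD.neg {p : ℕ} (hp : p.Prime) {r : ℕ} {x : ℚ} (hx : DD p r x) : DD p r (-x) := by
  simpa using (DD_int hp (-1)).zmul hp hx

lemma DD.sub {p : ℕ} (hp : p.Prime) {r : ℕ} {x y : ℚ} (hx : DD p r x) (hy : DD p r y) : DD p r (x - y) := by
  rw [sub_eq_add_neg]; exact hx.add hp (hy.neg hp)

lemma DD.mono {p : ℕ} {r s : ℕ} {x : ℚ} (hx : DD p r x) (h : s ≤ r) : DD p s x := by
  obtain ⟨a, b, hb, e⟩ := hx
  obtain ⟨t, rfl⟩ := Nat.exists_eq_add_of_le h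
  refine ⟨p^t*a, b, hb, ?_⟩
  rw [e]; push_cast; ring

lemma DD.sum {p : ℕ} (hp : p.Prime) {r : ℕ} {n : ℕ} {f : ℕ → ℚ} (h : ∀ i < n, DD p r (f i)) :
    DD p r (∑ i ∈ range n, f i) := by
  induction n with
  | zero => simpa using DD_zero hp r
  | succ n ih =>
    rw [Finset.sum_range_succ]
    exact (ih fun i hi => h i (by omega)).add hp (h n (by omega))

lemma DD.prod {p : ℕ} (hp : p.Prime) {n : ℕ} {f : ℕ → ℚ} (h : ∀ i < n, DD p 0 (f i)) :
    DD p 0 (∏ i ∈ range n, f i) := by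
  induction n with
  | zero => simpa using DD_one hp
  | succ n ih =>
    rw [Finset.prod_range_succ]
    exact (ih fun i hi => h i (by omega)).mul hp (h n (by omega))

lemma DD.pow0 {p : ℕ} (hp : p.Prime) {x : ℚ} (h : DD p 0 x) (n : ℕ) : DD p 0 (x^n) := by
  induction n with
  | zero => simpa using DD_one hp
  | succ n ih => rw [pow_succ]; exact ih.mul hp h

/-- A product with one factor divisible by `p`. -/
lemma DD.prod1 {p : ℕ} (hp : p.Prime) {n : ℕ} {f : ℕ → ℚ} (h : ∀ i < n, DD p 0 (f i)) (j : ℕ) (hj : j < n)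
    (h1 : DD p 1 (f j)) : DD p 1 (∏ i ∈ range n, f i) := by
  induction n with
  | zero => omega
  | succ n ih =>
    rw [Finset.prod_range_succ]
    by_cases hjn : j = n
    · subst hjn
      exact (DD.prod hp fun i hi => h i (by omega)).zmul hp h1
    · exact (ih (fun i hi => h i (by omega)) (by omega)).mul0 hp (h n (by omega))

lemma DD.prod_congr {p : ℕ} (hp : p.Prime) {r n : ℕ} {f g : ℕ → ℚ} (hf : ∀ i < n, DD p 0 (f i))
    (hg : ∀ i < n, DD p 0 (g i)) (h : ∀ i < n, DD p r (f i - g i)) :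
    DD p r (∏ i ∈ range n, f i - ∏ i ∈ range n, g i) := by
  induction n with
  | zero => simpa using DD_zero hp r
  | succ n ih =>
    rw [Finset.prod_range_succ, Finset.prod_range_succ]
    have h1 := ih (fun i hi => hf i (by omega)) (fun i hi => hg i (by omega)) (fun i hi => h i (by omega))
    have h2 := DD.prod hp (f := g) (n := n) fun i hi => hg i (by omega)
    have := (h1.mul0 hp (hf n (by omega))).add hp (h2.zmul hp (h n (by omega)))
    convert this using 1
    ring

lemma UU.mul {p : ℕ} (hp : p.Prime) {x y : ℚ} (hx : UU p x) (hy : UU p y) : UU p (x * y) := by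
  refine ⟨mul_ne_zero hx.1 hy.1, ?_⟩
  rw [mul_inv]; exact hx.2.mul hp hy.2

lemma UU.prod {p : ℕ} (hp : p.Prime) {n : ℕ} {f : ℕ → ℚ} (h : ∀ i < n, UU p (f i)) :
    UU p (∏ i ∈ range n, f i) := by
  induction n with
  | zero => simpa [UU] using DD_one hp
  | succ n ih =>
    rw [Finset.prod_range_succ]
    exact (ih fun i hi => h i (by omega)).mul hp (h n (by omega))

lemma UU_of {p : ℕ} {x : ℚ} (d n : ℤ) (h : x * d = n) (hn : ¬ ((p:ℤ) ∣ n)) : UU p x := by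
  have n0 : (n:ℚ) ≠ 0 := by
    intro h; apply hn; rw [Int.cast_eq_zero.mp h]; simp
  have x0 : x ≠ 0 := by rintro rfl; apply n0; rw [← h]; simp
  refine ⟨x0, d, n, hn, ?_⟩
  rw [← h]; field_simp

lemma DD_of {p : ℕ} {x : ℚ} (d n : ℤ) (h : x * d = n) (hn : ¬ ((p:ℤ) ∣ d)) : DD p 0 x :=
  ⟨n, d, hn, by simpa using h⟩

lemma DD.div {p : ℕ} (hp : p.Prime) {r : ℕ} {x y : ℚ} (hx : DD p r x) (hy : UU p y) : DD p r (x / y) := by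
  rw [div_eq_mul_inv]; exact hx.mul0 hp hy.2

lemma DD.div_congr {p : ℕ} (hp : p.Prime) {r : ℕ} {N N' E E' : ℚ} (hN' : DD p 0 N') (hE : UU p E) (hE' : UU p E')
    (h1 : DD p r (N - N')) (h2 : DD p r (E - E')) : DD p r (N / E - N' / E') := by
  have a1 := h1.div hp hE
  have a2 := ((hN'.zmul hp h2).div hp hE).div hp hE'
  have := a1.sub hp a2
  convert this using 1
  have := hE.1
  have := hE'.1
  field_simp
  ring

/-- First order expansion of a product. -/
lemma DD.expand {p : ℕ} (hp : p.Prime) {n : ℕ} {e : ℕ → ℚ} (he : ∀ i < n, DD p 0 (e i)) :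
    DD p 4 (1 - ∏ i ∈ range n, (1 - (p:ℚ)^2 * e i) - (p:ℚ)^2 * ∑ i ∈ range n, e i) := by
  induction n with
  | zero => simpa using DD_zero hp 4
  | succ n ih =>
    rw [Finset.prod_range_succ, Finset.sum_range_succ]
    have h1 := ih fun i hi => he i (by omega)
    have h2 : DD p 0 (∑ i ∈ range n, e i) := DD.sum hp fun i hi => he i (by omega)
    have hp2 := DD_ppow hp 2
    have hp4 := DD_ppow hp 4
    have hn := he n (by omega)
    have hh : DD p 0 (1 - (p:ℚ)^2 * e n) := (DD_one hp).sub hp (((hp2.mono (by omega)).mul hp hn))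
    have := (h1.mul0 hp hh).sub hp (hp4.mul0 hp (h2.mul hp hn))
    convert this using 1
    ring


lemma dix_prod (a c : ℚ) (m k : ℕ) : dix a c m k =
    ∏ i ∈ range k, ((a+i)*(-(m:ℚ)+i)*(c+i)) / ((1+i)*(1+a+m+i)*(1+a-c+i)) := by
  induction k with
  | zero => simp [dix, rf_zero]
  | succ k ih =>
    rw [Finset.prod_range_succ, ← ih]
    unfold dix
    rw [rf_succ, rf_succ, rf_succ, rf_succ, rf_succ, Nat.factorial_succ]
    push_cast
    rw [div_mul_div_comm]
    congr 1 <;> ring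


lemma nd_small {p t : ℕ} (_hp : p.Prime) (ht : p = 4*t+3) {z : ℤ} (q : ℤ) (n : ℕ) (h : z = p * q + n) (h0 : 0 < n) (h1 : n < p) : ¬ ((p:ℤ) ∣ z) := by
  intro hd
  have : (p:ℤ) ∣ n := by
    have := Int.dvd_sub hd (Dvd.intro q rfl)
    rwa [h, add_sub_cancel_left] at this
  have := Nat.le_of_dvd h0 (Int.natCast_dvd_natCast.mp this)
  omega

lemma nd_two {p t : ℕ} (hp : p.Prime) (ht : p = 4*t+3) : ¬ ((p:ℤ) ∣ 2) := nd_small hp ht 0 2 (by simp) (by omega) (by omega)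

lemma nd_four {p t : ℕ} (hp : p.Prime) (ht : p = 4*t+3) : ¬ ((p:ℤ) ∣ 4) := by
  have := mul_nd hp (nd_two hp ht) (nd_two hp ht)
  simpa using this

lemma DD_half {p t : ℕ} (hp : p.Prime) (ht : p = 4*t+3) {y : ℚ} (n : ℤ) (h : y * 2 = n) : DD p 0 y :=
  DD_of 2 n (by simpa using h) (nd_two hp ht)

lemma DD_quarter {p t : ℕ} (hp : p.Prime) (ht : p = 4*t+3) {y : ℚ} (n : ℤ) (h : y * 4 = n) : DD p 0 y :=
  DD_of 4 n (by simpa using h) (nd_four hp ht)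

lemma block {p t : ℕ} (hp : p.Prime) (ht : p = 4*t+3) (j : ℕ) :
    DD p 2 (∑ k ∈ range (2*t+2), (∏ i ∈ range k, ((1/2+((p*j:ℕ):ℚ)+i)/(1+((p*j:ℕ):ℚ)+i)))^3) := by
  have hpt : (p:ℚ) = 4*t+3 := by rw [ht]; push_cast; ring
  set x : ℚ := ((p*j:ℕ):ℚ) with hx
  have hxpj : x = p * j := by rw [hx]; push_cast; ring
  set a : ℚ := 1/2 + 2*x with ha
  set c : ℚ := 1/2 + x + p/2 with hc
  have h1 : ∀ i : ℕ, 1 + a + i ≠ 0 := by intro i; positivity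
  have h2 : ∀ i : ℕ, 1 + a - c + i ≠ 0 := by
    intro i h
    have : (2 + 2*((p*j:ℕ):ℚ) + 2*i) = p := by rw [← hx]; linarith
    have : 2 + 2*(p*j) + 2*i = p := by exact_mod_cast this
    omega
  have hd := dixon a c h1 h2 (2*t+1)
  -- the Dixon sum is divisible by p^2
  have hD : DD p 2 (∑ k ∈ range (2*t+1+1), dix a c (2*t+1) k) := by
    have u1 : UU p (risingFactorial (1+a/2) (2*t+1)) := by
      apply UU.prod hp
      intro i hi
      apply UU_of 4 (5 + 4*(p*j) + 4*i)
      · push_cast; rw [ha, hxpj]; ring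
      · by_cases h5 : 5 + 4*i < p
        · exact nd_small hp ht (4*j) (5+4*i) (by push_cast; ring) (by omega) h5
        · exact nd_small hp ht (4*j+1) (5+4*i-p) (by rw [Nat.cast_sub (by omega)]; push_cast; ring) (by omega) (by omega)
    have u2 : UU p (risingFactorial (1+a-c) (2*t+1)) := by
      apply UU.prod hp
      intro i hi
      apply UU_of 2 (2 + 2*(p*j) - p + 2*i)
      · push_cast; rw [ha, hc, hxpj]; ring
      · exact nd_small hp ht (2*j-1) (2+2*i) (by push_cast; ring) (by omega) (by omega)
    have v1 : DD p 1 (risingFactorial (1+a) (2*t+1)) := by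
      apply DD.prod1 hp (j := 2*t) _ (by omega)
      · refine ⟨1+4*j, 2, nd_two hp ht, ?_⟩
        rw [ha, hxpj]; push_cast; rw [hpt]; ring
      · intro i hi
        apply DD_half hp ht (3 + 4*(p*j) + 2*i)
        rw [ha, hxpj]; push_cast; ring
    have v2 : DD p 1 (risingFactorial (1+a/2-c) (2*t+1)) := by
      apply DD.prod1 hp (j := t) _ (by omega)
      · refine ⟨-1, 4, nd_four hp ht, ?_⟩
        rw [ha, hc, hxpj]; push_cast; rw [hpt]; ring
      · intro i hi
        apply DD_quarter hp ht (3 - 2*p + 4*i)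
        rw [ha, hc, hxpj]; push_cast; ring
    have u := u1.mul hp u2
    have := (v1.mul hp v2).div hp u
    rw [← hd, mul_div_cancel_right₀ _ u.1] at this
    exact this
  -- termwise congruence
  have hC : DD p 2 (∑ k ∈ range (2*t+2), ((∏ i ∈ range k, ((1/2+x+i)/(1+x+i)))^3 - dix a c (2*t+1) k)) := by
    apply DD.sum hp
    intro k hk
    rw [dix_prod, ← Finset.prod_pow]
    have hP : DD p 1 (p:ℚ) := by simpa using DD_ppow hp 1
    have hxD : DD p 1 x := by rw [hxpj]; exact hP.mul0 hp (DD_nat hp j)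
    have hpD : DD p 1 ((p:ℚ)/2) := ⟨1, 2, nd_two hp ht, by push_cast; ring⟩
    have D2 : DD p 0 2 := DD_nat hp 2
    have D3 : DD p 0 3 := DD_nat hp 3
    have Dx : DD p 0 x := DD_nat hp _
    have Dh : DD p 0 ((p:ℚ)/2) := hpD.mono (by omega)
    have hxx : DD p 2 (x*x) := hxD.mul hp hxD
    have hxp : DD p 2 (x*(p/2)) := hxD.mul hp hpD
    have hpp : DD p 2 ((p:ℚ)/2*(p/2)) := hpD.mul hp hpD
    have Nn : ∀ i < k, DD p 0 ((1/2+x+i)) := fun i hi =>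
      DD_half hp ht (1+2*(p*j)+2*i) (by rw [hxpj]; push_cast; ring)
    have Nn' : ∀ i < k, DD p 0 ((a+i)*(-((2*t+1:ℕ):ℚ)+i)*(c+i)) := by
      intro i hi
      apply DD.mul0 hp
      · apply DD.mul0 hp
        · exact DD_half hp ht (1+4*(p*j)+2*i) (by rw [ha, hxpj]; push_cast; ring)
        · exact DD_half hp ht (-2*(2*t+1)+2*i) (by push_cast; ring)
      · exact DD_half hp ht (1+2*(p*j)+p+2*i) (by rw [hc, hxpj]; push_cast; ring)
    have Uu : ∀ i < k, UU p (1+x+i) := fun i hi =>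
      UU_of 1 (1+(p*j)+i) (by rw [hxpj]; push_cast; ring)
        (nd_small hp ht j (1+i) (by push_cast; ring) (by omega) (by omega))
    have Uu3 : ∀ i < k, UU p ((1+x+i)^3) := by
      intro i hi
      have := ((Uu i hi).mul hp (Uu i hi)).mul hp (Uu i hi)
      rwa [show (1+x+i)*(1+x+i)*(1+x+i) = (1+x+(i:ℚ))^3 by ring] at this
    have Uu' : ∀ i < k, UU p ((1+i)*(1+a+((2*t+1:ℕ):ℚ)+i)*(1+a-c+i)) := by
      intro i hi
      apply UU.mul hp
      · apply UU.mul hp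
        · exact UU_of 1 (1+i) (by push_cast; ring)
            (nd_small hp ht 0 (1+i) (by push_cast; ring) (by omega) (by omega))
        · exact UU_of 2 (2+4*(p*j)+p+2*i) (by rw [ha, hxpj]; push_cast; rw [hpt]; ring)
            (nd_small hp ht (4*j+1) (2+2*i) (by push_cast; ring) (by omega) (by omega))
      · exact UU_of 2 (2+2*(p*j)-p+2*i) (by rw [ha, hc, hxpj]; push_cast; ring)
            (nd_small hp ht (2*j-1) (2+2*i) (by push_cast; ring) (by omega) (by omega))
    apply DD.prod_congr hp
    · intro i hi
      rw [div_pow]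
      exact ((Nn i hi).pow0 hp 3).div hp (Uu3 i hi)
    · intro i hi
      exact (Nn' i hi).div hp (Uu' i hi)
    · intro i hi
      rw [div_pow]
      apply DD.div_congr hp (Nn' i hi) (Uu3 i hi) (Uu' i hi)
      · -- numerators
        have Du : DD p 0 (1/2+(i:ℚ)) := DD_half hp ht (1+2*i) (by push_cast; ring)
        have q1 : -(((2*t+1:ℕ):ℚ)) = 1/2 - p/2 := by push_cast; rw [hpt]; ring
        rw [q1, ha, hc]
        have r1 : DD p 0 ((3:ℚ) * (1/2+i) + x - 2*(1/2+i)) :=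
          ((D3.mul hp Du).add hp Dx).sub hp (D2.mul hp Du)
        have r2 : DD p 0 ((2:ℚ)*x + (1/2+i) + x - x) :=
          (((D2.mul hp Dx).add hp Du).add hp Dx).sub hp Dx
        have r3 : DD p 0 ((x + p/2) * 2 - x + (1/2+i) - (1/2 + i)) := by
          exact ((((Dx.add hp Dh).mul hp D2).sub hp Dx).add hp Du).sub hp Du
        have s1 := hxx.mul0 hp r1
        have s2 := hpp.mul0 hp r2
        have s3 := hxp.mul0 hp (((D2.mul hp Dx).add hp Du))
        have := (s1.add hp s2).add hp s3
        convert this using 1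
        ring
      · -- denominators
        have Du : DD p 0 (1+(i:ℚ)) := by simpa using DD_nat hp (1+i)
        have q1 : 1+a+(((2*t+1:ℕ):ℚ)) = 1 + 2*x + p/2 := by rw [ha]; push_cast; rw [hpt]; ring
        have q2 : 1+a-c = 1 + x - p/2 := by rw [ha, hc]; ring
        rw [q1, q2]
        have s1 := hxx.mul0 hp (Du.add hp Dx)
        have s2 := hpp.mul0 hp Du
        have s3 := hxp.mul0 hp Du
        have := (s1.add hp s2).add hp s3
        convert this using 1
        ring
  rw [Finset.sum_sub_distrib] at hC
  have := hC.add hp hD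
  rwa [sub_add_cancel] at this


/-- `(1/2)_k / k!`. -/
def cc (k : ℕ) : ℚ := risingFactorial (1/2) k / (k.factorial : ℚ)

lemma cc_succ (k : ℕ) : cc (k+1) = cc k * ((1/2+k)/(1+k)) := by
  unfold cc
  rw [rf_succ, Nat.factorial_succ, div_mul_div_comm]
  push_cast
  congr 1; ring

lemma cc_central (k : ℕ) : cc k * 4^k = (k.centralBinom : ℚ) := by
  induction k with
  | zero => simp [cc, rf_zero]
  | succ k ih =>
    have h := Nat.succ_mul_centralBinom_succ k
    have h' : ((k:ℚ)+1) * ((k+1).centralBinom : ℚ) = 2 * (2*k+1) * (k.centralBinom : ℚ) := by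
      exact_mod_cast h
    have k0 : (k:ℚ)+1 ≠ 0 := by positivity
    apply mul_left_cancel₀ k0
    rw [h', ← ih, cc_succ, pow_succ]
    rw [add_comm 1 (k:ℚ)]
    field_simp
    ring

lemma cc_add (x k : ℕ) : cc (x + k) = cc x * ∏ i ∈ range k, ((1/2+(x:ℚ)+i)/(1+(x:ℚ)+i)) := by
  induction k with
  | zero => simp
  | succ k ih =>
    rw [← add_assoc, cc_succ, ih, Finset.prod_range_succ]
    push_cast
    rw [mul_assoc, add_assoc, add_assoc]


lemma nd_four_pow {p t : ℕ} (hp : p.Prime) (ht : p = 4*t+3) (k : ℕ) : ¬ ((p:ℤ) ∣ 4^k) := fun h =>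
  nd_four hp ht ((Nat.prime_iff_prime_int.mp hp).dvd_of_dvd_pow h)

lemma cc_int {p t : ℕ} (hp : p.Prime) (ht : p = 4*t+3) (k : ℕ) : DD p 0 (cc k) :=
  DD_of (4^k) k.centralBinom (by push_cast; exact cc_central k) (nd_four_pow hp ht k)

lemma cc_dvd {p t : ℕ} (hp : p.Prime) (ht : p = 4*t+3) (q r : ℕ) (h1 : 2*t+1 < r) (h2 : r < p) : DD p 1 (cc (p*q+r)) := by
  have : Fact p.Prime := ⟨hp⟩
  have : p ∣ (p*q+r).centralBinom := by
    rw [Nat.centralBinom_eq_two_mul_choose]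
    have h := @Choose.choose_modEq_choose_mod_mul_choose_div_nat (2*(p*q+r)) (p*q+r) p _
    have e1 : (2*(p*q+r)) % p = 2*r - p := by
      have : 2*(p*q+r) = (2*r-p) + p*(2*q+1) := by
        have : 2*r - p + p = 2*r := by omega
        nlinarith
      rw [this, Nat.add_mul_mod_self_left, Nat.mod_eq_of_lt (by omega)]
    have e2 : (p*q+r) % p = r := by
      rw [Nat.mul_add_mod, Nat.mod_eq_of_lt h2]
    rw [e1, e2, Nat.choose_eq_zero_of_lt (by omega : 2*r - p < r), zero_mul] at h
    exact (Nat.modEq_zero_iff_dvd).mp h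
  obtain ⟨s, hs⟩ := this
  refine ⟨s, 4^(p*q+r), nd_four_pow hp ht _, ?_⟩
  push_cast
  rw [cc_central, hs]; push_cast; ring

/-- The small quantities `p^2/n^2`. -/
lemma ee_gen {p t : ℕ} (hp : p.Prime) (ht : p = 4*t+3) (n : ℕ) (h0 : 0 < n) (hn : n < p^2) : DD p 0 ((p:ℚ)^2/(n:ℚ)^2) := by
  by_cases h : p ∣ n
  · obtain ⟨q, hq⟩ := h
    have hq' : (n:ℚ) = p * q := by exact_mod_cast hq
    have q0 : 0 < q := by
      rcases Nat.eq_zero_or_pos q with h | h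
      · subst h; omega
      · exact h
    have qp : q < p := by
      rw [hq, pow_two] at hn
      exact lt_of_mul_lt_mul_left hn (Nat.zero_le p)
    have u : UU p ((q:ℚ)) := UU_of 1 q (by push_cast; ring) (nd_small hp ht 0 q (by ring) q0 qp)
    have p0 : (p:ℚ) ≠ 0 := by exact_mod_cast hp.ne_zero
    have q00 := u.1
    have := (DD_one hp).div hp (u.mul hp u)
    rw [hq']
    convert this using 1
    field_simp
  · have hn : ¬ ((p:ℤ) ∣ (n:ℤ)) := fun h' => h (Int.natCast_dvd_natCast.mp h')
    have u : UU p (n:ℚ) := UU_of 1 (n:ℤ) (by push_cast; ring) hn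
    have := ((DD_ppow hp 2).div hp (u.mul hp u)).mono (s := 0) (by omega)
    rwa [pow_two (n:ℚ)]

lemma ee_int {p t : ℕ} (hp : p.Prime) (ht : p = 4*t+3) (i : ℕ) (hi : 2*i+1 < p^2) : DD p 0 ((p:ℚ)^2/(2*i+1)^2) := by
  simpa using ee_gen hp ht (2*i+1) (by omega) hi

lemma ee_two {p t : ℕ} (hp : p.Prime) (ht : p = 4*t+3) (q i : ℕ) (hi : i < 2*t+1) : DD p 2 ((p:ℚ)^2/(2*((p*q+i:ℕ):ℚ)+1)^2) := by
  have u : UU p (2*((p*q+i:ℕ):ℚ)+1) := UU_of 1 (2*(p*q+i)+1) (by push_cast; ring)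
    (nd_small hp ht (2*q) (2*i+1) (by push_cast; ring) (by omega) (by omega))
  have := ((DD_ppow hp 2).div hp (u.mul hp u))
  rwa [pow_two (2*((p*q+i:ℕ):ℚ)+1)]

lemma key_sum {p t : ℕ} (hp : p.Prime) (ht : p = 4*t+3) :
    DD p 2 (∑ k ∈ range (p*(2*t+1)+(2*t+2)), cc k ^ 3 * ∑ i ∈ range k, (p:ℚ)^2/(2*i+1)^2) := by
  set E : ℕ → ℚ := fun k => ∑ i ∈ range k, (p:ℚ)^2/(2*i+1)^2 with hE
  have psq : p^2 = 2*(p*(2*t+1)) + p := by rw [ht]; ring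
  have E0 : ∀ k ≤ p*(2*t+1)+(2*t+1), DD p 0 (E k) := by
    intro k hk
    apply DD.sum hp
    intro i hi
    apply ee_int hp ht
    omega
  have le : ∀ q ≤ 2*t+1, p*q ≤ p*(2*t+1) := fun q hq => Nat.mul_le_mul_left p hq
  have good : ∀ q ≤ 2*t+1, DD p 2 (∑ k ∈ range (2*t+2), cc (p*q+k)^3 * E (p*q+k)) := by
    intro q hq
    have hq' := le q hq
    have b := (((cc_int hp ht (p*q)).pow0 hp 3).zmul hp (block hp ht q)).mul0 hp (E0 (p*q) (by omega))
    have d : DD p 2 (∑ k ∈ range (2*t+2), cc (p*q+k)^3 * (E (p*q+k) - E (p*q))) := by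
      apply DD.sum hp
      intro k hk
      apply ((cc_int hp ht (p*q+k)).pow0 hp 3).zmul hp
      have : E (p*q+k) - E (p*q) = ∑ i ∈ range k, (p:ℚ)^2/(2*((p*q+i:ℕ):ℚ)+1)^2 := by
        simp only [hE]
        rw [Finset.sum_range_add, add_sub_cancel_left]
      rw [this]
      apply DD.sum hp
      intro i hi
      exact ee_two hp ht q i (by omega)
    have := d.add hp b
    convert this using 1
    generalize E (p*q) = e0
    rw [Finset.mul_sum, Finset.sum_mul, ← Finset.sum_add_distrib]
    apply Finset.sum_congr rfl
    intro k _
    rw [cc_add (p*q) k]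
    ring
  have full : ∀ q ≤ 2*t+1, DD p 2 (∑ k ∈ range (p*q), cc k^3 * E k) := by
    intro q
    induction q with
    | zero => intro _; simpa using DD_zero hp 2
    | succ q ih =>
      intro hq
      have h1 := ih (by omega)
      have h2 := good q (by omega)
      have hq' := le (q+1) hq
      rw [mul_add, mul_one] at hq'
      have h3 : DD p 2 (∑ k ∈ range (2*t+1), cc (p*q+((2*t+2)+k))^3 * E (p*q+((2*t+2)+k))) := by
        apply DD.sum hp
        intro k hk
        apply DD.mul0 hp _ (E0 _ (by omega))
        have c1 := cc_dvd hp ht q ((2*t+2)+k) (by omega) (by omega)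
        have := ((c1.mul hp c1).mul hp c1).mono (s := 2) (by omega)
        convert this using 1
        ring
      have e : p*(q+1) = p*q + ((2*t+2)+(2*t+1)) := by rw [mul_add]; omega
      rw [e, Finset.sum_range_add, Finset.sum_range_add _ (2*t+2)]
      exact h1.add hp (h2.add hp h3)
  rw [Finset.sum_range_add]
  exact (full _ le_rfl).add hp (good _ le_rfl)


lemma whp_cc (N : ℕ) (P : ℚ) (hP : P^2 = 4*N+1) (k : ℕ) :
    whp (2*N) k = cc k ^ 3 * ∏ i ∈ range k, (1 - P^2 * (P^2/(2*i+1)^2)) := by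
  induction k with
  | zero => simp [whp, cc, rf_zero]
  | succ k ih =>
    have e : whp (2*N) (k+1) = whp (2*N) k *
        ((-((2*N:ℕ):ℚ)+k)*(((2*N:ℕ):ℚ)+1+k)*(1/2+k)/(1+k)^3) := by
      unfold whp
      rw [rf_succ, rf_succ, rf_succ, Nat.factorial_succ, div_mul_div_comm]
      congr 1
      · ring
      · push_cast; ring
    rw [e, ih, cc_succ, Finset.prod_range_succ, hP]
    have h1 : (1:ℚ)+k ≠ 0 := by positivity
    have h2 : 2*(k:ℚ)+1 ≠ 0 := by positivity
    generalize cc k = C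
    generalize ∏ i ∈ range k, (1 - (4*(N:ℚ)+1) * ((4*N+1)/(2*(i:ℚ)+1)^2)) = Q
    push_cast
    field_simp
    ring

lemma rhs_eq (N : ℕ) :
    (4*(N:ℚ)+1) * risingFactorial (3/4) (2*N) * ∏ i ∈ range N, ((i+1:ℚ)^2 - ((4*(N:ℚ)+1)/4)^2)
      = risingFactorial (5/4) (2*N) * ∏ i ∈ range N, ((1/2+i:ℚ)^2 - ((4*(N:ℚ)+1)/4)^2) := by
  set y : ℚ := (4*(N:ℚ)+1)/4 with hy
  have a1 : risingFactorial (3/4) (2*N) = (∏ i ∈ range N, (y - (1/2+i))) * ∏ i ∈ range N, (y + (1/2+i)) := by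
    unfold risingFactorial
    rw [two_mul, Finset.prod_range_add, ← Finset.prod_range_reflect]
    congr 1
    · apply Finset.prod_congr rfl
      intro i hi
      have := Finset.mem_range.mp hi
      rw [Nat.cast_sub (by omega), Nat.cast_sub (by omega), hy]; push_cast; ring
    · apply Finset.prod_congr rfl
      intro i hi
      rw [hy]; push_cast; ring
  have a2 : risingFactorial (5/4) (2*N) = (∏ i ∈ range N, (y - i)) * ∏ i ∈ range N, (y + (i+1)) := by
    unfold risingFactorial
    rw [two_mul, Finset.prod_range_add, ← Finset.prod_range_reflect]
    congr 1
    · apply Finset.prod_congr rfl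
      intro i hi
      have := Finset.mem_range.mp hi
      rw [Nat.cast_sub (by omega), Nat.cast_sub (by omega), hy]; push_cast; ring
    · apply Finset.prod_congr rfl
      intro i hi
      rw [hy]; push_cast; ring
  have a3 : (4*(N:ℚ)+1) * ∏ i ∈ range N, (y - (i+1)) = ∏ i ∈ range N, (y - i) := by
    have h1 := Finset.prod_range_succ (fun i : ℕ => y - (i:ℚ)) N
    rw [Finset.prod_range_succ'] at h1
    push_cast at h1
    have : y - N = 1/4 := by rw [hy]; ring
    rw [this] at h1
    have h4 : 4*(N:ℚ)+1 = 4*y := by rw [hy]; ring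
    rw [h4]
    linarith
  have a4 : ∏ i ∈ range N, ((i+1:ℚ)^2 - y^2) = (∏ i ∈ range N, (-1:ℚ)) * ((∏ i ∈ range N, (y - (i+1))) * ∏ i ∈ range N, (y + (i+1))) := by
    rw [← Finset.prod_mul_distrib, ← Finset.prod_mul_distrib]
    exact Finset.prod_congr rfl fun i _ => by ring
  have a5 : ∏ i ∈ range N, ((1/2+i:ℚ)^2 - y^2) = (∏ i ∈ range N, (-1:ℚ)) * ((∏ i ∈ range N, (y - (1/2+i))) * ∏ i ∈ range N, (y + (1/2+i))) := by
    rw [← Finset.prod_mul_distrib, ← Finset.prod_mul_distrib]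
    exact Finset.prod_congr rfl fun i _ => by ring
  rw [a4, a5, a1, a2, ← a3]
  ring


lemma UU_one_sub {p : ℕ} (_hp : p.Prime) {g : ℚ} (hg : DD p 0 g) : UU p (1 - (p:ℚ)^2 * g) := by
  obtain ⟨a, b, hb, e⟩ := hg
  apply UU_of b (b - p^2*a)
  · push_cast
    linear_combination (-(p:ℚ)^2) * e
  · intro h
    apply hb
    have h2 : (p:ℤ) ∣ (p:ℤ)^2*a := Dvd.dvd.mul_right (dvd_pow_self _ (by norm_num)) _
    have := dvd_add h h2
    rwa [sub_add_cancel] at this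

lemma rhs_congr {p t : ℕ} (hp : p.Prime) (ht : p = 4*t+3) (N : ℕ) (hN : N = 4*t^2+6*t+2) :
    DD p 4 (cc N ^ 2 - (p:ℚ)^2 * risingFactorial (3/4) (2*N) / risingFactorial (5/4) (2*N)) := by
  have hpN : p^2 = 4*N+1 := by rw [ht, hN]; ring
  have hpN' : (p:ℚ)^2 = 4*N+1 := by exact_mod_cast hpN
  have h5 : risingFactorial (5/4) (2*N) ≠ 0 := rf_ne _ _ fun i => by positivity
  have D4 : DD p 0 (1/4:ℚ) := DD_quarter hp ht 1 (by norm_num)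
  have hc : DD p 2 (cc N ^ 2) := by
    have e : N = p*t + (3*t+2) := by rw [hN, ht]; ring
    have := cc_dvd hp ht t (3*t+2) (by omega) (by omega)
    rw [← e] at this
    rw [pow_two]
    exact this.mul hp this
  set f : ℕ → ℚ := fun i => 1/4 * ((p:ℚ)^2/(2*i+1)^2) with hf
  set g : ℕ → ℚ := fun i => 1/4 * (1/4 * ((p:ℚ)^2/(i+1)^2)) with hg
  have f0 : ∀ i < N, DD p 0 (f i) := fun i hi => D4.mul hp (ee_int hp ht i (by omega))
  have g0 : ∀ i < N, DD p 0 (g i) := fun i hi => D4.mul hp (D4.mul hp (by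
    simpa using ee_gen hp ht (i+1) (by omega) (by omega)))
  have P2 := DD_ppow hp 2
  have P20 := P2.mono (s := 0) (by omega)
  have ub : UU p (∏ i ∈ range N, (1 - (p:ℚ)^2 * g i)) :=
    UU.prod hp fun i hi => UU_one_sub hp (g0 i hi)
  have hcong : DD p 2 (∏ i ∈ range N, (1 - (p:ℚ)^2 * g i) - ∏ i ∈ range N, (1 - (p:ℚ)^2 * f i)) := by
    apply DD.prod_congr hp
    · intro i hi
      exact (DD_one hp).sub hp (P20.mul hp (g0 i hi))
    · intro i hi
      exact (DD_one hp).sub hp (P20.mul hp (f0 i hi))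
    · intro i hi
      have := P2.mul0 hp ((f0 i hi).sub hp (g0 i hi))
      convert this using 1
      ring
  have hfin := (hc.mul hp hcong).div hp ub
  convert hfin using 1
  have e1 : ∏ i ∈ range N, ((i+1:ℚ)^2 - ((4*(N:ℚ)+1)/4)^2)
      = (∏ i ∈ range N, (i+1:ℚ)^2) * ∏ i ∈ range N, (1 - (p:ℚ)^2 * g i) := by
    rw [← Finset.prod_mul_distrib]
    apply Finset.prod_congr rfl
    intro i _
    have : (i:ℚ)+1 ≠ 0 := by positivity
    simp only [hg]
    rw [hpN']
    field_simp
  have e2 : ∏ i ∈ range N, ((1/2+i:ℚ)^2 - ((4*(N:ℚ)+1)/4)^2)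
      = (∏ i ∈ range N, (1/2+i:ℚ)^2) * ∏ i ∈ range N, (1 - (p:ℚ)^2 * f i) := by
    rw [← Finset.prod_mul_distrib]
    apply Finset.prod_congr rfl
    intro i _
    have : 2*(i:ℚ)+1 ≠ 0 := by positivity
    simp only [hf]
    rw [hpN']
    field_simp
    ring
  have e3 : cc N ^ 2 * (∏ i ∈ range N, (i+1:ℚ)^2) = ∏ i ∈ range N, (1/2+i:ℚ)^2 := by
    have := cc_add 0 N
    rw [zero_add] at this
    rw [this, mul_pow, ← Finset.prod_pow, mul_assoc, ← Finset.prod_mul_distrib]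
    simp only [cc, rf_zero, Nat.factorial_zero, Nat.cast_one, div_one, one_pow, one_mul]
    apply Finset.prod_congr rfl
    intro i _
    have : (i:ℚ)+1 ≠ 0 := by positivity
    push_cast
    rw [add_zero, add_zero, add_comm (1:ℚ) (i:ℚ)]
    field_simp
  have h := rhs_eq N
  rw [e1, e2, ← e3, ← hpN'] at h
  have u0 := ub.1
  have z0 : (∏ i ∈ range N, (i+1:ℚ)^2) ≠ 0 := Finset.prod_ne_zero_iff.mpr fun i _ => by positivity
  generalize (∏ i ∈ range N, (i+1:ℚ)^2) = Z at *
  generalize ∏ i ∈ range N, (1 - (p:ℚ)^2 * g i) = B at *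
  generalize ∏ i ∈ range N, (1 - (p:ℚ)^2 * f i) = A at *
  generalize risingFactorial (5/4) (2*N) = R5 at *
  generalize risingFactorial (3/4) (2*N) = R3 at *
  have h' : (p:ℚ)^2 * R3 * B = R5 * (cc N^2 * A) := by
    apply mul_right_cancel₀ z0
    linear_combination h
  field_simp
  linear_combination (-1:ℚ) * h'

lemma lhs_congr {p t : ℕ} (hp : p.Prime) (ht : p = 4*t+3) (N : ℕ) (hN : N = 4*t^2+6*t+2) :
    DD p 4 (∑ k ∈ range (2*N+1), cc k ^ 3 - cc N ^ 2) := by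
  have hpN : p^2 = 4*N+1 := by rw [ht, hN]; ring
  have hpN' : (p:ℚ)^2 = 4*N+1 := by exact_mod_cast hpN
  have hw : cc N ^ 2 = ∑ k ∈ range (2*N+1), whp (2*N) k := (whipple N).symm
  have hk := key_sum hp ht
  rw [show p*(2*t+1)+(2*t+2) = 2*N+1 by rw [hN, ht]; ring] at hk
  have h1 := (DD_ppow hp 2).mul hp hk
  have h2 : DD p 4 (∑ k ∈ range (2*N+1), cc k ^ 3 *
      (1 - ∏ i ∈ range k, (1 - (p:ℚ)^2 * ((p:ℚ)^2/(2*i+1)^2)) - (p:ℚ)^2 * ∑ i ∈ range k, (p:ℚ)^2/(2*i+1)^2)) := by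
    apply DD.sum hp
    intro k hk
    apply ((cc_int hp ht k).pow0 hp 3).zmul hp
    apply DD.expand hp
    intro i hi
    exact ee_int hp ht i (by omega)
  have := h2.add hp h1
  convert this using 1
  rw [hw, ← Finset.sum_sub_distrib, Finset.mul_sum, ← Finset.sum_add_distrib]
  apply Finset.sum_congr rfl
  intro k _
  rw [whp_cc N p hpN' k]
  ring


/-- For a prime `p ≡ 3 (mod 4)`,
`∑_{k=0}^{(p^2-1)/2} (1/2)_k^3/k!^3 ≡ p^2 (3/4)_{(p^2-1)/2}/(5/4)_{(p^2-1)/2} (mod p^4)`. -/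
theorem stmt7 (p : ℕ) (hp : p.Prime) (h : p % 4 = 3) :
    ∃ a b : ℤ, ¬ ((p : ℤ) ∣ b) ∧
      ((∑ k ∈ Finset.range ((p ^ 2 - 1) / 2 + 1),
          risingFactorial (1/2) k ^ 3 / (k.factorial : ℚ) ^ 3)
        - (p : ℚ) ^ 2 * risingFactorial (3/4) ((p ^ 2 - 1) / 2)
            / risingFactorial (5/4) ((p ^ 2 - 1) / 2)) * (b : ℚ)
      = (p : ℚ) ^ 4 * (a : ℚ) := by
  obtain ⟨t, ht⟩ : ∃ t, p = 4*t+3 := ⟨p/4, by omega⟩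
  obtain ⟨N, hN⟩ : ∃ N, N = 4*t^2+6*t+2 := ⟨_, rfl⟩
  have hpN : p^2 = 4*N+1 := by rw [ht, hN]; ring
  have e : (p^2-1)/2 = 2*N := by omega
  rw [e]
  have := (lhs_congr hp ht N hN).add hp (rhs_congr hp ht N hN)
  rw [sub_add_sub_cancel] at this
  simpa only [DD, cc, div_pow] using this
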